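/- For every deduction Π in I that is not in normal form, there exists a deduction Π′ in I with the same conclusion, whose undischarged assumptions are among those of Π, and whose rank is strictly smaller than the rank of Π (under the lexicographic order on ranks). -/

import Mathlib

set_option autoImplicit false

/-- Formulas of intuitionistic propositional logic: atomic formulas (indexed by
natural numbers), `⊥` (`falsum`), conjunction, disjunction and implication.
Following the paper, `⊥` is a (nullary) connective and not an atomic formula. -/
inductive Formula : Type
  | atom : ℕ → Formula
  | falsum : Formula
  | and : Formula → Formula → Formula
  | or : Formula → Formula → Formula
  | imp : Formula → Formula → Formula
  deriving DecidableEq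

/-- Deductions in Negri and von Plato's system **I** of intuitionistic
propositional logic with general introduction and elimination rules, indexed by
their conclusion.  Each constructor corresponds to a rule of the system:

* `ass A` : the one-formula deduction of `A` from the open assumption `A`;
* `andI d₁ d₂ d₃` : from deductions `d₁` of `A`, `d₂` of `B` (the specific
  premises) and a deduction `d₃` of `C` (the arbitrary premise) in which
  assumptions of the form `A ∧ B` may be discharged, infer `C`;
* `impI A d₁ d₂` : from a deduction `d₁` of `B` in which assumptions `A` may be
  discharged and a deduction `d₂` of `C` in which assumptions `A ⊃ B` may be
  discharged, infer `C`;
* `orI₁ B d₁ d₂` / `orI₂ A d₁ d₂` : from a deduction of `A` (respectively of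
  `B`) and a deduction of `C` in which assumptions `A ∨ B` may be discharged,
  infer `C`;
* `andE d₁ d₂` : from a deduction of the major premise `A ∧ B` and a deduction
  of `C` in which assumptions `A` and `B` may be discharged, infer `C`;
* `impE d₁ d₂ d₃` : from a deduction of the major premise `A ⊃ B`, a deduction
  of the minor premise `A`, and a deduction of `C` in which assumptions `B`
  may be discharged, infer `C`;
* `orE d₁ d₂ d₃` : from a deduction of the major premise `A ∨ B` and two
  deductions of `C` in which assumptions `A`, respectively `B`, may be
  discharged, infer `C`;
* `falsumE d` : from a deduction of `⊥` infer any `C`.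

Discharge is recorded by the function `hyps` below: a rule application
discharges all open occurrences of the indicated formulas in the indicated
subdeductions. -/
inductive Ded : Formula → Type
  | ass (A : Formula) : Ded A
  | andI {A B C : Formula} (d₁ : Ded A) (d₂ : Ded B) (d₃ : Ded C) : Ded C
  | impI (A : Formula) {B C : Formula} (d₁ : Ded B) (d₂ : Ded C) : Ded C
  | orI₁ {A : Formula} (B : Formula) {C : Formula} (d₁ : Ded A) (d₂ : Ded C) : Ded C
  | orI₂ (A : Formula) {B C : Formula} (d₁ : Ded B) (d₂ : Ded C) : Ded C
  | andE {A B C : Formula} (d₁ : Ded (Formula.and A B)) (d₂ : Ded C) : Ded C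
  | impE {A B C : Formula} (d₁ : Ded (Formula.imp A B)) (d₂ : Ded A) (d₃ : Ded C) : Ded C
  | orE {A B C : Formula} (d₁ : Ded (Formula.or A B)) (d₂ : Ded C) (d₃ : Ded C) : Ded C
  | falsumE {C : Formula} (d : Ded Formula.falsum) : Ded C

/-- The set of undischarged (open) assumptions of a deduction. -/
def hyps : ∀ {C : Formula}, Ded C → Set Formula
  | _, .ass A => {A}
  | _, @Ded.andI A B _ d₁ d₂ d₃ => hyps d₁ ∪ hyps d₂ ∪ (hyps d₃ \ {Formula.and A B})
  | _, @Ded.impI A B _ d₁ d₂ => (hyps d₁ \ {A}) ∪ (hyps d₂ \ {Formula.imp A B})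
  | _, @Ded.orI₁ A B _ d₁ d₂ => hyps d₁ ∪ (hyps d₂ \ {Formula.or A B})
  | _, @Ded.orI₂ A B _ d₁ d₂ => hyps d₁ ∪ (hyps d₂ \ {Formula.or A B})
  | _, @Ded.andE A B _ d₁ d₂ => hyps d₁ ∪ (hyps d₂ \ {A, B})
  | _, @Ded.impE _ B _ d₁ d₂ d₃ => hyps d₁ ∪ hyps d₂ ∪ (hyps d₃ \ {B})
  | _, @Ded.orE A B _ d₁ d₂ d₃ => hyps d₁ ∪ (hyps d₂ \ {A}) ∪ (hyps d₃ \ {B})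
  | _, .falsumE d => hyps d
/-- `d.isAss` holds iff `d` is a one-formula deduction, i.e. an assumption. -/
def Ded.isAss : ∀ {C : Formula}, Ded C → Bool
  | _, .ass _ => true
  | _, _ => false

/-- `MajorOpen F d` : somewhere in `d` there is an occurrence of the formula
`F` as an assumption (a leaf of the tree) that is the major premise of an
application of an elimination rule, and this occurrence is not discharged
within `d` (so that it can be discharged by a rule applied below `d`). -/
def MajorOpen (F : Formula) : ∀ {C : Formula}, Ded C → Prop
  | _, .ass _ => False
  | _, @Ded.andI A B _ d₁ d₂ d₃ =>
      MajorOpen F d₁ ∨ MajorOpen F d₂ ∨ (MajorOpen F d₃ ∧ F ≠ Formula.and A B)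
  | _, @Ded.impI A B _ d₁ d₂ =>
      (MajorOpen F d₁ ∧ F ≠ A) ∨ (MajorOpen F d₂ ∧ F ≠ Formula.imp A B)
  | _, @Ded.orI₁ A B _ d₁ d₂ =>
      MajorOpen F d₁ ∨ (MajorOpen F d₂ ∧ F ≠ Formula.or A B)
  | _, @Ded.orI₂ A B _ d₁ d₂ =>
      MajorOpen F d₁ ∨ (MajorOpen F d₂ ∧ F ≠ Formula.or A B)
  | _, @Ded.andE A B _ d₁ d₂ =>
      (F = Formula.and A B ∧ d₁.isAss = true) ∨ MajorOpen F d₁ ∨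
        (MajorOpen F d₂ ∧ F ≠ A ∧ F ≠ B)
  | _, @Ded.impE A B _ d₁ d₂ d₃ =>
      (F = Formula.imp A B ∧ d₁.isAss = true) ∨ MajorOpen F d₁ ∨ MajorOpen F d₂ ∨
        (MajorOpen F d₃ ∧ F ≠ B)
  | _, @Ded.orE A B _ d₁ d₂ d₃ =>
      (F = Formula.or A B ∧ d₁.isAss = true) ∨ MajorOpen F d₁ ∨
        (MajorOpen F d₂ ∧ F ≠ A) ∨ (MajorOpen F d₃ ∧ F ≠ B)
  | _, @Ded.falsumE _ d => (F = Formula.falsum ∧ d.isAss = true) ∨ MajorOpen F d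

/-- `HasMaxFormula d` : the deduction `d` contains a maximal formula, i.e. an
occurrence of a formula `A ∗ B` that is at the same time the major premise of
an application of `∗E` and the major assumption discharged by an application of
`∗I`. -/
def HasMaxFormula : ∀ {C : Formula}, Ded C → Prop
  | _, .ass _ => False
  | _, @Ded.andI A B _ d₁ d₂ d₃ =>
      MajorOpen (Formula.and A B) d₃ ∨ HasMaxFormula d₁ ∨ HasMaxFormula d₂ ∨ HasMaxFormula d₃
  | _, @Ded.impI A B _ d₁ d₂ =>
      MajorOpen (Formula.imp A B) d₂ ∨ HasMaxFormula d₁ ∨ HasMaxFormula d₂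
  | _, @Ded.orI₁ A B _ d₁ d₂ =>
      MajorOpen (Formula.or A B) d₂ ∨ HasMaxFormula d₁ ∨ HasMaxFormula d₂
  | _, @Ded.orI₂ A B _ d₁ d₂ =>
      MajorOpen (Formula.or A B) d₂ ∨ HasMaxFormula d₁ ∨ HasMaxFormula d₂
  | _, .andE d₁ d₂ => HasMaxFormula d₁ ∨ HasMaxFormula d₂
  | _, .impE d₁ d₂ d₃ => HasMaxFormula d₁ ∨ HasMaxFormula d₂ ∨ HasMaxFormula d₃
  | _, .orE d₁ d₂ d₃ => HasMaxFormula d₁ ∨ HasMaxFormula d₂ ∨ HasMaxFormula d₃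
  | _, .falsumE d => HasMaxFormula d

/-- The root rule application of `d` has an arbitrary premise; equivalently,
the conclusion of `d` is immediately preceded by an arbitrary premise of the
same shape, so that the conclusion of `d` is the last formula of a segment
(a sequence of occurrences of the same formula each of which is an arbitrary
premise of an application of a rule whose conclusion is the next one). -/
def Ded.endsWithArbitrary : ∀ {C : Formula}, Ded C → Prop
  | _, .ass _ => False
  | _, .falsumE _ => False
  | _, _ => True

/-- `HasMaxSegment d` : the deduction `d` contains a maximal segment, i.e. a
segment (of length `> 1`) whose last formula is the major premise of an
application of an elimination rule.  Since the first formula of a segment is an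
arbitrary premise and each later formula is the conclusion of a rule applied to
an arbitrary premise, this happens exactly when the major premise of some
elimination rule application in `d` is the conclusion of a rule application
that has an arbitrary premise. -/
def HasMaxSegment : ∀ {C : Formula}, Ded C → Prop
  | _, .ass _ => False
  | _, .andI d₁ d₂ d₃ => HasMaxSegment d₁ ∨ HasMaxSegment d₂ ∨ HasMaxSegment d₃
  | _, .impI _ d₁ d₂ => HasMaxSegment d₁ ∨ HasMaxSegment d₂
  | _, .orI₁ _ d₁ d₂ => HasMaxSegment d₁ ∨ HasMaxSegment d₂
  | _, .orI₂ _ d₁ d₂ => HasMaxSegment d₁ ∨ HasMaxSegment d₂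
  | _, .andE d₁ d₂ => d₁.endsWithArbitrary ∨ HasMaxSegment d₁ ∨ HasMaxSegment d₂
  | _, .impE d₁ d₂ d₃ =>
      d₁.endsWithArbitrary ∨ HasMaxSegment d₁ ∨ HasMaxSegment d₂ ∨ HasMaxSegment d₃
  | _, .orE d₁ d₂ d₃ =>
      d₁.endsWithArbitrary ∨ HasMaxSegment d₁ ∨ HasMaxSegment d₂ ∨ HasMaxSegment d₃
  | _, .falsumE d => d.endsWithArbitrary ∨ HasMaxSegment d

/-- A deduction is in normal form if it contains neither maximal formulas nor
maximal segments. -/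
def NormalForm {C : Formula} (d : Ded C) : Prop := ¬ HasMaxFormula d ∧ ¬ HasMaxSegment d

/-- The degree of a formula: the number of connectives occurring in it (`⊥` is
a connective, atomic formulas have degree `0`). -/
def Formula.degree : Formula → ℕ
  | .atom _ => 0
  | .falsum => 1
  | .and A B => A.degree + B.degree + 1
  | .or A B => A.degree + B.degree + 1
  | .imp A B => A.degree + B.degree + 1

/-- Counting version of `MajorOpen`: the number of occurrences of `F` in `d` as
an assumption (leaf) that is the major premise of an application of an
elimination rule and is not discharged within `d`. -/
def countMajorOpen (F : Formula) : ∀ {C : Formula}, Ded C → ℕ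
  | _, .ass _ => 0
  | _, @Ded.andI A B _ d₁ d₂ d₃ =>
      countMajorOpen F d₁ + countMajorOpen F d₂ +
        (if F = Formula.and A B then 0 else countMajorOpen F d₃)
  | _, @Ded.impI A B _ d₁ d₂ =>
      (if F = A then 0 else countMajorOpen F d₁) +
        (if F = Formula.imp A B then 0 else countMajorOpen F d₂)
  | _, @Ded.orI₁ A B _ d₁ d₂ =>
      countMajorOpen F d₁ + (if F = Formula.or A B then 0 else countMajorOpen F d₂)
  | _, @Ded.orI₂ A B _ d₁ d₂ =>
      countMajorOpen F d₁ + (if F = Formula.or A B then 0 else countMajorOpen F d₂)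
  | _, @Ded.andE A B _ d₁ d₂ =>
      (if F = Formula.and A B ∧ d₁.isAss = true then 1 else 0) + countMajorOpen F d₁ +
        (if F = A ∨ F = B then 0 else countMajorOpen F d₂)
  | _, @Ded.impE A B _ d₁ d₂ d₃ =>
      (if F = Formula.imp A B ∧ d₁.isAss = true then 1 else 0) + countMajorOpen F d₁ +
        countMajorOpen F d₂ + (if F = B then 0 else countMajorOpen F d₃)
  | _, @Ded.orE A B _ d₁ d₂ d₃ =>
      (if F = Formula.or A B ∧ d₁.isAss = true then 1 else 0) + countMajorOpen F d₁ +
        (if F = A then 0 else countMajorOpen F d₂) +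
        (if F = B then 0 else countMajorOpen F d₃)
  | _, .falsumE d => countMajorOpen F d

/-- The multiset of the degrees of all maximal formulas in a deduction: each
application of an introduction rule for `∗` contributes one occurrence of the
degree of `A ∗ B` for each occurrence of `A ∗ B` it discharges that is the
major premise of an application of `∗E`. -/
def maxFormulaDegrees : ∀ {C : Formula}, Ded C → Multiset ℕ
  | _, .ass _ => 0
  | _, @Ded.andI A B _ d₁ d₂ d₃ =>
      Multiset.replicate (countMajorOpen (Formula.and A B) d₃) (Formula.and A B).degree +
        maxFormulaDegrees d₁ + maxFormulaDegrees d₂ + maxFormulaDegrees d₃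
  | _, @Ded.impI A B _ d₁ d₂ =>
      Multiset.replicate (countMajorOpen (Formula.imp A B) d₂) (Formula.imp A B).degree +
        maxFormulaDegrees d₁ + maxFormulaDegrees d₂
  | _, @Ded.orI₁ A B _ d₁ d₂ =>
      Multiset.replicate (countMajorOpen (Formula.or A B) d₂) (Formula.or A B).degree +
        maxFormulaDegrees d₁ + maxFormulaDegrees d₂
  | _, @Ded.orI₂ A B _ d₁ d₂ =>
      Multiset.replicate (countMajorOpen (Formula.or A B) d₂) (Formula.or A B).degree +
        maxFormulaDegrees d₁ + maxFormulaDegrees d₂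
  | _, .andE d₁ d₂ => maxFormulaDegrees d₁ + maxFormulaDegrees d₂
  | _, .impE d₁ d₂ d₃ => maxFormulaDegrees d₁ + maxFormulaDegrees d₂ + maxFormulaDegrees d₃
  | _, .orE d₁ d₂ d₃ => maxFormulaDegrees d₁ + maxFormulaDegrees d₂ + maxFormulaDegrees d₃
  | _, .falsumE d => maxFormulaDegrees d

/-- The multiset of the lengths of the (maximal-length) chains of occurrences
of the conclusion of `d` obtained by repeatedly passing from the conclusion of
a rule application to its arbitrary premise.  A chain of length `n ≥ 2` ending
in the major premise of an elimination rule is a maximal segment of length `n`. -/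
def chains : ∀ {C : Formula}, Ded C → Multiset ℕ
  | _, .ass _ => {1}
  | _, .andI _ _ d₃ => (chains d₃).map (· + 1)
  | _, .impI _ _ d₂ => (chains d₂).map (· + 1)
  | _, .orI₁ _ _ d₂ => (chains d₂).map (· + 1)
  | _, .orI₂ _ _ d₂ => (chains d₂).map (· + 1)
  | _, .andE _ d₂ => (chains d₂).map (· + 1)
  | _, .impE _ _ d₃ => (chains d₃).map (· + 1)
  | _, .orE _ d₂ d₃ => (chains d₂).map (· + 1) + (chains d₃).map (· + 1)
  | _, .falsumE _ => {1}

/-- The multiset of (degree, length) pairs of the maximal segments of a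
deduction: for each application of an elimination rule, each chain of length
`≥ 2` ending in its major premise is a maximal segment, whose degree is the
degree of the major premise. -/
def maxSegments : ∀ {C : Formula}, Ded C → Multiset (ℕ × ℕ)
  | _, .ass _ => 0
  | _, .andI d₁ d₂ d₃ => maxSegments d₁ + maxSegments d₂ + maxSegments d₃
  | _, .impI _ d₁ d₂ => maxSegments d₁ + maxSegments d₂
  | _, .orI₁ _ d₁ d₂ => maxSegments d₁ + maxSegments d₂
  | _, .orI₂ _ d₁ d₂ => maxSegments d₁ + maxSegments d₂
  | _, @Ded.andE A B _ d₁ d₂ =>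
      ((chains d₁).filter (fun n => 2 ≤ n)).map (fun n => ((Formula.and A B).degree, n)) +
        maxSegments d₁ + maxSegments d₂
  | _, @Ded.impE A B _ d₁ d₂ d₃ =>
      ((chains d₁).filter (fun n => 2 ≤ n)).map (fun n => ((Formula.imp A B).degree, n)) +
        maxSegments d₁ + maxSegments d₂ + maxSegments d₃
  | _, @Ded.orE A B _ d₁ d₂ d₃ =>
      ((chains d₁).filter (fun n => 2 ≤ n)).map (fun n => ((Formula.or A B).degree, n)) +
        maxSegments d₁ + maxSegments d₂ + maxSegments d₃
  | _, .falsumE d =>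
      ((chains d).filter (fun n => 2 ≤ n)).map (fun n => (Formula.falsum.degree, n)) +
        maxSegments d

/-- The highest degree of a maximal formula or maximal segment in a deduction
(`0` if there is none). -/
def maxDegree {C : Formula} (d : Ded C) : ℕ :=
  (maxFormulaDegrees d + (maxSegments d).map Prod.fst).sup

/-- The rank of a deduction `Π` is the pair `⟨d, l⟩` where `d` is the highest
degree of a maximal formula or maximal segment in `Π` (`0` if there is none)
and `l` is the sum of the lengths of the maximal segments of highest degree
plus the number of maximal formulas in `Π`. -/
def rank {C : Formula} (d : Ded C) : ℕ × ℕ :=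
  (maxDegree d,
    (((maxSegments d).filter (fun s => s.1 = maxDegree d)).map Prod.snd).sum +
      Multiset.card (maxFormulaDegrees d))

/-!
Normalization by evaluation. Interpret formulas in a Beth model whose worlds are sets of
assumptions, ordered by inclusion: a world is covered by the worlds reached from it by a tree of
eliminations whose major premises are assumptions, and an atom is forced where it has a normal
deduction. Deductions are sound for forcing, every world forces its own elements, and a forced
formula has a normal deduction; so every deduction can be replaced by a normal one with no new
open assumptions. Degrees are positive, so the normal deductions are those of maximal degree `0`,
and the normal deduction has smaller rank already in the first component.
-/

theorem multiset_replicate_eq_zero_iff {α : Type*} {n : ℕ} {a : α} :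
    Multiset.replicate n a = 0 ↔ n = 0 := by
  rw [← Multiset.card_eq_zero, Multiset.card_replicate]

theorem multiset_sup_eq_bot_iff_of_bot_notMem {α : Type*} [SemilatticeSup α] [OrderBot α]
    {s : Multiset α} (hs : ⊥ ∉ s) : s.sup = ⊥ ↔ s = 0 := by
  refine ⟨fun h => Multiset.eq_zero_of_forall_notMem fun a ha => hs ?_, fun h => by simp [h]⟩
  exact le_bot_iff.1 (h ▸ Multiset.le_sup ha) ▸ ha

theorem countMajorOpen_eq_zero_iff {F : Formula} (hF : F ≠ .falsum) {C : Formula} (d : Ded C) :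
    countMajorOpen F d = 0 ↔ ¬ MajorOpen F d := by
  induction d <;> simp only [MajorOpen, countMajorOpen] <;> grind

theorem maxFormulaDegrees_eq_zero_iff {C : Formula} (d : Ded C) :
    maxFormulaDegrees d = 0 ↔ ¬ HasMaxFormula d := by
  induction d <;>
    simp_all [maxFormulaDegrees, HasMaxFormula, countMajorOpen_eq_zero_iff,
      multiset_replicate_eq_zero_iff, and_assoc]

theorem zero_notMem_maxFormulaDegrees {C : Formula} (d : Ded C) : 0 ∉ maxFormulaDegrees d := by
  induction d <;> simp_all [maxFormulaDegrees, Multiset.mem_replicate, Formula.degree]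

theorem zero_notMem_chains {C : Formula} (d : Ded C) : 0 ∉ chains d := by
  cases d <;> simp [chains]

theorem chains_ne_zero {C : Formula} (d : Ded C) : chains d ≠ 0 := by
  induction d <;> simp_all [chains]

theorem filter_two_le_map_succ_chains {C : Formula} (d : Ded C) :
    ((chains d).map (· + 1)).filter (2 ≤ ·) = (chains d).map (· + 1) := by
  have one_le : ∀ n ∈ chains d, 1 ≤ n := fun n hn =>
    Nat.one_le_iff_ne_zero.2 (ne_of_mem_of_not_mem hn (zero_notMem_chains d))
  simpa [Multiset.filter_eq_self] using one_le

theorem filter_two_le_chains_eq_zero_iff {C : Formula} (d : Ded C) :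
    (chains d).filter (2 ≤ ·) = 0 ↔ ¬ d.endsWithArbitrary := by
  cases d <;>
    simp [chains, Ded.endsWithArbitrary, Multiset.filter_add, filter_two_le_map_succ_chains,
      chains_ne_zero, Multiset.filter_singleton]

theorem maxSegments_eq_zero_iff {C : Formula} (d : Ded C) :
    maxSegments d = 0 ↔ ¬ HasMaxSegment d := by
  induction d <;>
    simp_all only [maxSegments, HasMaxSegment, add_eq_zero, Multiset.map_eq_zero,
      filter_two_le_chains_eq_zero_iff, not_or, and_assoc, not_false_iff]

theorem degree_ne_zero_of_mem_maxSegments {C : Formula} (d : Ded C) :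
    ∀ s ∈ maxSegments d, s.1 ≠ 0 := by
  induction d <;> simp only [maxSegments, Multiset.mem_add, Multiset.mem_map] <;>
    grind [Formula.degree]

theorem maxDegree_eq_zero_iff {C : Formula} (d : Ded C) : maxDegree d = 0 ↔ NormalForm d := by
  have degrees_pos : (⊥ : ℕ) ∉ maxFormulaDegrees d + (maxSegments d).map Prod.fst := by
    simpa [zero_notMem_maxFormulaDegrees] using
      fun n hn => degree_ne_zero_of_mem_maxSegments d (0, n) hn rfl
  rw [maxDegree, ← bot_eq_zero, multiset_sup_eq_bot_iff_of_bot_notMem degrees_pos, add_eq_zero,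
    Multiset.map_eq_zero, maxFormulaDegrees_eq_zero_iff, maxSegments_eq_zero_iff, NormalForm]

/-- `NormalDerivable A Γ`: there is a deduction of `A` in normal form with open assumptions in
`Γ`. The formula comes first so that `NormalDerivable A` is a predicate on worlds `Γ`. -/
def NormalDerivable (A : Formula) (Γ : Set Formula) : Prop :=
  ∃ d : Ded A, NormalForm d ∧ hyps d ⊆ Γ

namespace NormalDerivable

variable {A B C : Formula} {Γ : Set Formula}

theorem monotone (A : Formula) : Monotone (NormalDerivable A) :=
  fun _ _ hΓΔ ⟨d, d_normal, d_hyps⟩ => ⟨d, d_normal, d_hyps.trans hΓΔ⟩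

theorem of_mem (h : A ∈ Γ) : NormalDerivable A Γ :=
  ⟨.ass A, by simp [NormalForm, HasMaxFormula, HasMaxSegment], by simpa [hyps] using h⟩

theorem andI : NormalDerivable A Γ → NormalDerivable B Γ → NormalDerivable (.and A B) Γ := by
  rintro ⟨d, d_normal, d_hyps⟩ ⟨e, e_normal, e_hyps⟩
  refine ⟨.andI d e (.ass (.and A B)), ?_, by simp [hyps, d_hyps, e_hyps]⟩
  simp_all [NormalForm, HasMaxFormula, HasMaxSegment, MajorOpen]

theorem impI : NormalDerivable B (insert A Γ) → NormalDerivable (.imp A B) Γ := by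
  rintro ⟨d, d_normal, d_hyps⟩
  refine ⟨.impI A d (.ass (.imp A B)), ?_, by simpa [hyps] using d_hyps⟩
  simp_all [NormalForm, HasMaxFormula, HasMaxSegment, MajorOpen]

theorem orI₁ : NormalDerivable A Γ → NormalDerivable (.or A B) Γ := by
  rintro ⟨d, d_normal, d_hyps⟩
  refine ⟨.orI₁ B d (.ass (.or A B)), ?_, by simp [hyps, d_hyps]⟩
  simp_all [NormalForm, HasMaxFormula, HasMaxSegment, MajorOpen]

theorem orI₂ : NormalDerivable B Γ → NormalDerivable (.or A B) Γ := by
  rintro ⟨d, d_normal, d_hyps⟩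
  refine ⟨.orI₂ A d (.ass (.or A B)), ?_, by simp [hyps, d_hyps]⟩
  simp_all [NormalForm, HasMaxFormula, HasMaxSegment, MajorOpen]

theorem andE (h : .and A B ∈ Γ) :
    NormalDerivable C (insert A (insert B Γ)) → NormalDerivable C Γ := by
  rintro ⟨d, d_normal, d_hyps⟩
  refine ⟨.andE (.ass (.and A B)) d, ?_, ?_⟩
  · simp_all [NormalForm, HasMaxFormula, HasMaxSegment, Ded.endsWithArbitrary]
  · simpa [hyps, Set.insert_subset_iff, h, Set.insert_union] using d_hyps

theorem impE (h : .imp A B ∈ Γ) :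
    NormalDerivable A Γ → NormalDerivable C (insert B Γ) → NormalDerivable C Γ := by
  rintro ⟨d, d_normal, d_hyps⟩ ⟨e, e_normal, e_hyps⟩
  refine ⟨.impE (.ass (.imp A B)) d e, ?_, ?_⟩
  · simp_all [NormalForm, HasMaxFormula, HasMaxSegment, Ded.endsWithArbitrary]
  · simpa [hyps, Set.insert_subset_iff, h, d_hyps] using e_hyps

theorem orE (h : .or A B ∈ Γ) :
    NormalDerivable C (insert A Γ) → NormalDerivable C (insert B Γ) → NormalDerivable C Γ := by
  rintro ⟨d, d_normal, d_hyps⟩ ⟨e, e_normal, e_hyps⟩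
  refine ⟨.orE (.ass (.or A B)) d e, ?_, ?_⟩
  · simp_all [NormalForm, HasMaxFormula, HasMaxSegment, Ded.endsWithArbitrary]
  · simpa [hyps, Set.insert_subset_iff, h] using And.intro d_hyps e_hyps

theorem falsumE (h : .falsum ∈ Γ) : NormalDerivable C Γ := by
  refine ⟨.falsumE (.ass .falsum), ?_, by simpa [hyps] using h⟩
  simp [NormalForm, HasMaxFormula, HasMaxSegment, Ded.endsWithArbitrary]

end NormalDerivable

/-- `Cover P Γ`: the world `Γ` is covered, in the sense of Beth semantics, by worlds satisfying
`P`. A cover is a tree of eliminations whose major premises are assumptions, as in a normal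
deduction; each branch adds the formulas discharged by the elimination. -/
inductive Cover (P : Set Formula → Prop) : Set Formula → Prop
  | base {Γ : Set Formula} : P Γ → Cover P Γ
  | falsum {Γ : Set Formula} : Formula.falsum ∈ Γ → Cover P Γ
  | and {Γ : Set Formula} {A B : Formula} : Formula.and A B ∈ Γ →
      Cover P (insert A (insert B Γ)) → Cover P Γ
  | or {Γ : Set Formula} {A B : Formula} : Formula.or A B ∈ Γ →
      Cover P (insert A Γ) → Cover P (insert B Γ) → Cover P Γ
  | imp {Γ : Set Formula} {A B : Formula} : Formula.imp A B ∈ Γ → NormalDerivable A Γ →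
      Cover P (insert B Γ) → Cover P Γ

namespace Cover

variable {P Q : Set Formula → Prop} {Γ : Set Formula}

theorem monotone (hP : Monotone P) : Monotone (Cover P) := by
  intro Γ Δ hΓΔ h
  induction h generalizing Δ with
  | base h => exact .base (hP hΓΔ h)
  | falsum h => exact .falsum (hΓΔ h)
  | and h _ ih => exact .and (hΓΔ h) (ih (by gcongr))
  | or h _ _ ihA ihB => exact .or (hΓΔ h) (ihA (by gcongr)) (ihB (by gcongr))
  | imp h hA _ ih => exact .imp (hΓΔ h) (NormalDerivable.monotone _ hΓΔ hA) (ih (by gcongr))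

theorem bind (h : Cover P Γ) (f : ∀ Δ, Γ ⊆ Δ → P Δ → Cover Q Δ) : Cover Q Γ := by
  induction h with
  | base h => exact f _ subset_rfl h
  | falsum h => exact .falsum h
  | and h _ ih =>
    exact .and h (ih fun Δ hΔ => f Δ (((Set.subset_insert _ _).trans
      (Set.subset_insert _ _)).trans hΔ))
  | or h _ _ ihA ihB =>
    exact .or h (ihA fun Δ hΔ => f Δ ((Set.subset_insert _ _).trans hΔ))
      (ihB fun Δ hΔ => f Δ ((Set.subset_insert _ _).trans hΔ))
  | imp h hA _ ih => exact .imp h hA (ih fun Δ hΔ => f Δ ((Set.subset_insert _ _).trans hΔ))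

theorem map (h : Cover P Γ) (f : ∀ Δ, Γ ⊆ Δ → P Δ → Q Δ) : Cover Q Γ :=
  h.bind fun Δ hΔ p => .base (f Δ hΔ p)

theorem join (h : Cover (Cover P) Γ) : Cover P Γ :=
  h.bind fun _ _ => id

theorem normalDerivable {C : Formula} (h : Cover (NormalDerivable C) Γ) : NormalDerivable C Γ := by
  induction h with
  | base h => exact h
  | falsum h => exact .falsumE h
  | and h _ ih => exact .andE h ih
  | or h _ _ ihA ihB => exact .orE h ihA ihB
  | imp h hA _ ih => exact .impE h hA ih

end Cover

/-- `Forces A Γ`: the world `Γ` forces the formula `A` in the Beth model of normal deductions. -/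
def Forces : Formula → Set Formula → Prop
  | .atom n, Γ => NormalDerivable (.atom n) Γ
  | .falsum, Γ => Cover (fun _ => False) Γ
  | .and A B, Γ => Forces A Γ ∧ Forces B Γ
  | .or A B, Γ => Cover (fun Δ => Forces A Δ ∨ Forces B Δ) Γ
  | .imp A B, Γ => ∀ Δ, Γ ⊆ Δ → Forces A Δ → Forces B Δ

namespace Forces

variable {A B C : Formula} {Γ : Set Formula}

theorem monotone (A : Formula) : Monotone (Forces A) := by
  induction A with
  | atom n => exact NormalDerivable.monotone _
  | falsum => exact Cover.monotone monotone_const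
  | and A B ihA ihB => exact fun _ _ hΓΔ h => ⟨ihA hΓΔ h.1, ihB hΓΔ h.2⟩
  | or A B ihA ihB => exact Cover.monotone fun _ _ hΓΔ => Or.imp (ihA hΓΔ) (ihB hΓΔ)
  | imp => exact fun _ _ hΓΔ h Θ hΔΘ => h Θ (hΓΔ.trans hΔΘ)

theorem of_cover (h : Cover (Forces C) Γ) : Forces C Γ := by
  induction C generalizing Γ with
  | atom n => exact h.normalDerivable
  | falsum => exact h.join
  | and A B ihA ihB => exact ⟨ihA (h.map fun _ _ => And.left), ihB (h.map fun _ _ => And.right)⟩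
  | or => exact h.join
  | imp A B _ ihB =>
    intro Δ hΓΔ hA
    have cover_imp : Cover (Forces (.imp A B)) Δ := Cover.monotone (monotone _) hΓΔ h
    exact ihB (cover_imp.map fun Θ hΔΘ hAB => hAB Θ subset_rfl (monotone A hΔΘ hA))

theorem falsum_elim (h : Forces .falsum Γ) : Forces C Γ :=
  of_cover (Cover.map h fun _ _ => False.elim)

theorem or_elim (h : Forces (.or A B) Γ) (hA : ∀ Δ, Γ ⊆ Δ → Forces A Δ → Forces C Δ)
    (hB : ∀ Δ, Γ ⊆ Δ → Forces B Δ → Forces C Δ) : Forces C Γ :=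
  of_cover (Cover.map h fun Δ hΔ => Or.rec (hA Δ hΔ) (hB Δ hΔ))

-- Proved together because implication is contravariant: reifying `A ⊃ B` needs reflection at `A`,
-- and reflecting it needs reification at `A`.
theorem reflect_and_reify (A : Formula) :
    (∀ Γ, A ∈ Γ → Forces A Γ) ∧ (∀ Γ, Forces A Γ → NormalDerivable A Γ) := by
  induction A with
  | atom n => exact ⟨fun Γ => NormalDerivable.of_mem, fun Γ => id⟩
  | falsum =>
    exact ⟨fun Γ => .falsum, fun Γ h => (Cover.map h fun _ _ => False.elim).normalDerivable⟩
  | and A B ihA ihB =>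
    refine ⟨fun Γ h => ⟨?_, ?_⟩, fun Γ h => .andI (ihA.2 Γ h.1) (ihB.2 Γ h.2)⟩
    · exact of_cover (.and h (.base (ihA.1 _ (by simp))))
    · exact of_cover (.and h (.base (ihB.1 _ (by simp))))
  | or A B ihA ihB =>
    refine ⟨fun Γ h => .or h (.base (.inl ?_)) (.base (.inr ?_)), fun Γ h => ?_⟩
    · exact ihA.1 _ (Set.mem_insert A Γ)
    · exact ihB.1 _ (Set.mem_insert B Γ)
    · exact (Cover.map h fun Δ _ => Or.rec (.orI₁ ∘ ihA.2 Δ) (.orI₂ ∘ ihB.2 Δ)).normalDerivable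
  | imp A B ihA ihB =>
    refine ⟨fun Γ h Δ hΓΔ hA => ?_, fun Γ h => .impI (ihB.2 _ ?_)⟩
    · exact of_cover (.imp (hΓΔ h) (ihA.2 Δ hA) (.base (ihB.1 _ (Set.mem_insert B Δ))))
    · exact h _ (Set.subset_insert A Γ) (ihA.1 _ (Set.mem_insert A Γ))

theorem of_mem (h : A ∈ Γ) : Forces A Γ :=
  (reflect_and_reify A).1 Γ h

theorem normalDerivable (h : Forces A Γ) : NormalDerivable A Γ :=
  (reflect_and_reify A).2 Γ h

end Forces

/-- `ForcesAll S Γ`: the world `Γ` forces every formula of `S`. -/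
def ForcesAll (S Γ : Set Formula) : Prop :=
  ∀ A ∈ S, Forces A Γ

namespace ForcesAll

variable {S T Γ Δ : Set Formula} {A B : Formula}

theorem monotone (S : Set Formula) : Monotone (ForcesAll S) :=
  fun _ _ hΓΔ h A hA => Forces.monotone A hΓΔ (h A hA)

theorem union_iff : ForcesAll (S ∪ T) Γ ↔ ForcesAll S Γ ∧ ForcesAll T Γ := by
  simp only [ForcesAll, Set.mem_union, or_imp, forall_and]

theorem of_sdiff (h : ForcesAll (S \ T) Γ) (hT : ForcesAll T Γ) : ForcesAll S Γ := fun A hA =>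
  (em (A ∈ T)).elim (hT A) fun hAT => h A ⟨hA, hAT⟩

theorem of_sdiff_singleton (h : ForcesAll (S \ {A}) Γ) (hA : Forces A Γ) : ForcesAll S Γ :=
  h.of_sdiff (by simpa [ForcesAll] using hA)

end ForcesAll

theorem Ded.sound {C : Formula} (d : Ded C) {Γ : Set Formula} (h : ForcesAll (hyps d) Γ) :
    Forces C Γ := by
  induction d generalizing Γ <;> simp only [hyps, ForcesAll.union_iff] at h
  case ass A => exact h A rfl
  case andI ihA ihB ihC =>
    obtain ⟨⟨hA, hB⟩, hC⟩ := h
    exact ihC (hC.of_sdiff_singleton ⟨ihA hA, ihB hB⟩)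
  case impI ihB ihC =>
    obtain ⟨hB, hC⟩ := h
    exact ihC (hC.of_sdiff_singleton fun Δ hΓΔ hA =>
      ihB ((ForcesAll.monotone _ hΓΔ hB).of_sdiff_singleton hA))
  case orI₁ ihA ihC =>
    obtain ⟨hA, hC⟩ := h
    exact ihC (hC.of_sdiff_singleton (.base (.inl (ihA hA))))
  case orI₂ ihB ihC =>
    obtain ⟨hB, hC⟩ := h
    exact ihC (hC.of_sdiff_singleton (.base (.inr (ihB hB))))
  case andE ihAB ihC =>
    obtain ⟨hAB, hC⟩ := h
    exact ihC (hC.of_sdiff (by simpa [ForcesAll, Forces] using ihAB hAB))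
  case impE ihAB ihA ihC =>
    obtain ⟨⟨hAB, hA⟩, hC⟩ := h
    exact ihC (hC.of_sdiff_singleton (ihAB hAB Γ subset_rfl (ihA hA)))
  case orE ihAB ihC₁ ihC₂ =>
    obtain ⟨⟨hAB, hC₁⟩, hC₂⟩ := h
    exact (ihAB hAB).or_elim
      (fun Δ hΓΔ hA => ihC₁ ((ForcesAll.monotone _ hΓΔ hC₁).of_sdiff_singleton hA))
      (fun Δ hΓΔ hB => ihC₂ ((ForcesAll.monotone _ hΓΔ hC₂).of_sdiff_singleton hB))
  case falsumE ih => exact (ih h).falsum_elim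

theorem exists_normalForm {C : Formula} (d : Ded C) :
    ∃ e : Ded C, NormalForm e ∧ hyps e ⊆ hyps d :=
  (d.sound fun _ => Forces.of_mem).normalDerivable

/-- **Rank reduction**: for every deduction `Π` in I that is not in normal
form, there is a deduction `Π'` in I with the same conclusion, whose
undischarged assumptions are among those of `Π`, and whose rank is strictly
smaller than the rank of `Π` in the lexicographic order on ranks. -/
theorem rank_reduction {C : Formula} (d : Ded C) (h : ¬ NormalForm d) :
    ∃ d' : Ded C, hyps d' ⊆ hyps d ∧
      Prod.Lex (· < ·) (· < ·) (rank d') (rank d) := by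
  obtain ⟨e, e_normal, e_hyps⟩ := exists_normalForm d
  have rank_fst_lt : maxDegree e < maxDegree d := by
    rw [(maxDegree_eq_zero_iff e).2 e_normal]
    exact Nat.pos_of_ne_zero (mt (maxDegree_eq_zero_iff d).1 h)
  exact ⟨e, e_hyps, Prod.Lex.left _ _ rank_fst_lt⟩
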